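/- Let (V,E) be a connected finite bipartite weighted graph with V = V₁ ∪ V₂ and weight function m, and let λ be such that ‖Mφ‖ ≤ λ·‖φ‖ for every φ ∈ ℓ²(V) orthogonal to both 𝟙_{V₁} and 𝟙_{V₂}. Let U ⊆ V₁ be nonempty, N(U) = {v ∈ V₂ : ∃ u ∈ U, {u,v} ∈ E}, fix 0 < δ < 1, and let W ⊆ N(U) be such that for every u ∈ U, (Σ_{v∈W, {u,v}∈E} m({v,u})) / m(u) ≥ δ. Then m(U)/m(W) ≤ (4/(3δ)) · ( 2λ/√δ + m(U)/m(V₁) ). -/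

import Mathlib

open Finset

noncomputable section
open scoped Classical

/-- Sum of edge weights between two vertex sets (over ordered pairs),
i.e. `m(U₁,U₂)` for a weighted graph given by the symmetric kernel `m`. -/
def pairW {α : Type*} (m : α → α → ℝ) (U₁ U₂ : Finset α) : ℝ :=
  ∑ u ∈ U₁, ∑ v ∈ U₂, m u v

/-- Weighted degree `m(v)` of a vertex, relative to the vertex set `vs` of the graph. -/
def degOn {α : Type*} (m : α → α → ℝ) (vs : Finset α) (v : α) : ℝ :=
  ∑ u ∈ vs, m v u

/-- Weight `m(U)` of a set of vertices. -/
def vertOn {α : Type*} (m : α → α → ℝ) (vs : Finset α) (U : Finset α) : ℝ :=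
  ∑ v ∈ U, degOn m vs v

/-- The (generalized) Cheeger constant
`h = min over nonempty proper U ⊆ vs of m(U, vs∖U)·m(vs)/(m(U)·m(vs∖U))`. -/
def cheegerOn {α : Type*} (m : α → α → ℝ) (vs : Finset α) : ℝ :=
  sInf { x : ℝ | ∃ U : Finset α, U ⊆ vs ∧ U.Nonempty ∧ U ≠ vs ∧
    x = pairW m U (vs \ U) * vertOn m vs vs / (vertOn m vs U * vertOn m vs (vs \ U)) }

/-- A weighted graph is a `λ`-expander if `1 - h ≤ λ`. -/
def IsExpanderOn {α : Type*} (m : α → α → ℝ) (vs : Finset α) (lam : ℝ) : Prop :=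
  1 - cheegerOn m vs ≤ lam

/-- The ℓ² inner product `⟨φ,ψ⟩ = Σ_v m(v) φ(v) ψ(v)` with respect to the vertex weights. -/
def iprodK {α : Type*} [Fintype α] (m : α → α → ℝ) (φ ψ : α → ℝ) : ℝ :=
  ∑ v, (∑ u, m v u) * (φ v * ψ v)

/-- The random walk operator `Mφ(v) = (1/m(v)) Σ_u m({u,v}) φ(u)`. -/
def walkK {α : Type*} [Fintype α] (m : α → α → ℝ) (φ : α → ℝ) (v : α) : ℝ :=
  (∑ u, m v u * φ u) / (∑ u, m v u)

/-!
Let `φ` be `𝟙_U` minus its average `c = m(U)/m(V₁)` on `V₁`. It is orthogonal to `𝟙_{V₁}` and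
`𝟙_{V₂}` and `‖φ‖² ≤ m(U)`. Since the neighbours of `W` lie in `V₁`, pairing `Mφ` with `𝟙_W` gives
`m(W,U) - c m(W)`, so Cauchy–Schwarz and the spectral bound yield
`(m(W,U) - c m(W))² ≤ λ² m(U) m(W)`.
The degree condition gives `δ m(U) ≤ m(W,U) ≤ m(W)`. Hence the right-hand side is at most
`(λ m(W) / √δ)²`, and `δ m(U) ≤ m(W,U) ≤ (λ/√δ + c) m(W)`.
-/

section VertexWeights

variable {α : Type*} {m : α → α → ℝ} {vs : Finset α}

lemma degOn_nonneg (hnonneg : ∀ u v, 0 ≤ m u v) (v : α) : 0 ≤ degOn m vs v :=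
  sum_nonneg fun u _ => hnonneg v u

lemma vertOn_nonneg (hnonneg : ∀ u v, 0 ≤ m u v) (U : Finset α) : 0 ≤ vertOn m vs U :=
  sum_nonneg fun v _ => degOn_nonneg hnonneg v

lemma vertOn_mono (hnonneg : ∀ u v, 0 ≤ m u v) {U V : Finset α} (hUV : U ⊆ V) :
    vertOn m vs U ≤ vertOn m vs V :=
  sum_le_sum_of_subset_of_nonneg hUV fun v _ _ => degOn_nonneg hnonneg v

lemma pairW_comm (hsymm : ∀ u v, m u v = m v u) (U W : Finset α) : pairW m U W = pairW m W U := by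
  unfold pairW
  rw [sum_comm]
  exact sum_congr rfl fun w _ => sum_congr rfl fun u _ => hsymm u w

lemma pairW_le_vertOn (hnonneg : ∀ u v, 0 ≤ m u v) (W : Finset α) {U : Finset α} (hU : U ⊆ vs) :
    pairW m W U ≤ vertOn m vs W :=
  sum_le_sum fun w _ => sum_le_sum_of_subset_of_nonneg hU fun u _ _ => hnonneg w u

lemma mul_vertOn_le_pairW {U W : Finset α} {d : ℝ}
    (h : ∀ u ∈ U, d * degOn m vs u ≤ ∑ v ∈ W, m u v) : d * vertOn m vs U ≤ pairW m U W := by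
  unfold vertOn
  rw [mul_sum]
  exact sum_le_sum h

lemma degOn_pos_of_le_div (hnonneg : ∀ u v, 0 ≤ m u v) {u : α} {d x : ℝ} (hd : 0 < d)
    (h : d ≤ x / degOn m vs u) : 0 < degOn m vs u := by
  refine (degOn_nonneg hnonneg u).lt_of_ne' fun hzero => ?_
  rw [hzero, div_zero] at h
  exact hd.not_ge h

end VertexWeights

section RandomWalk

variable {α : Type*} [Fintype α] {m : α → α → ℝ}

lemma iprodK_ite_mem [DecidableEq α] (φ : α → ℝ) (S : Finset α) :
    iprodK m φ (fun v => if v ∈ S then 1 else 0) = ∑ v ∈ S, degOn m univ v * φ v := by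
  simp [iprodK, degOn]

lemma degOn_mul_walkK (hnonneg : ∀ u v, 0 ≤ m u v) (φ : α → ℝ) (v : α) :
    degOn m univ v * walkK m φ v = ∑ u, m v u * φ u := by
  refine mul_div_cancel_of_imp' fun hzero => ?_
  have hm : ∀ u ∈ univ, m v u = 0 := (sum_eq_zero_iff_of_nonneg fun u _ => hnonneg v u).1 hzero
  exact sum_eq_zero fun u hu => by rw [hm u hu, zero_mul]

lemma sq_sum_degOn_mul_le (hnonneg : ∀ u v, 0 ≤ m u v) (ψ : α → ℝ) (W : Finset α) :
    (∑ w ∈ W, degOn m univ w * ψ w) ^ 2 ≤ vertOn m univ W * iprodK m ψ ψ := by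
  have hterm (w : α) : 0 ≤ degOn m univ w * (ψ w * ψ w) :=
    mul_nonneg (degOn_nonneg hnonneg w) (mul_self_nonneg _)
  calc (∑ w ∈ W, degOn m univ w * ψ w) ^ 2
      ≤ vertOn m univ W * ∑ w ∈ W, degOn m univ w * (ψ w * ψ w) :=
        sum_sq_le_sum_mul_sum_of_sq_le_mul W (fun w _ => degOn_nonneg hnonneg w)
          (fun w _ => hterm w) fun w _ => le_of_eq (by ring)
    _ ≤ vertOn m univ W * iprodK m ψ ψ :=
        mul_le_mul_of_nonneg_left
          (sum_le_sum_of_subset_of_nonneg (subset_univ W) fun w _ _ => hterm w)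
          (vertOn_nonneg hnonneg W)

end RandomWalk

section CenteredIndicator

variable {α : Type*} [Fintype α] [DecidableEq α] {m : α → α → ℝ} {V₁ U : Finset α}

/-- The function `𝟙_U - (m(U)/m(V₁)) 𝟙_{V₁}`. For `U ⊆ V₁` it is the component of `𝟙_U` orthogonal
to `𝟙_{V₁}` in `ℓ²(V)`, to which the spectral bound applies. -/
def centeredIndicator (m : α → α → ℝ) (V₁ U : Finset α) (v : α) : ℝ :=
  (if v ∈ U then 1 else 0) - vertOn m univ U / vertOn m univ V₁ * (if v ∈ V₁ then 1 else 0)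

lemma iprodK_centeredIndicator_ite_mem (hnonneg : ∀ u v, 0 ≤ m u v) (hUV : U ⊆ V₁) :
    iprodK m (centeredIndicator m V₁ U) (fun v => if v ∈ V₁ then 1 else 0) = 0 := by
  have hcancel : vertOn m univ U / vertOn m univ V₁ * vertOn m univ V₁ = vertOn m univ U :=
    div_mul_cancel_of_imp fun hzero =>
      le_antisymm (hzero ▸ vertOn_mono hnonneg hUV) (vertOn_nonneg hnonneg U)
  calc iprodK m (centeredIndicator m V₁ U) (fun v => if v ∈ V₁ then 1 else 0)
      = ∑ v ∈ V₁, ((if v ∈ U then degOn m univ v else 0)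
          - vertOn m univ U / vertOn m univ V₁ * degOn m univ v) := by
        rw [iprodK_ite_mem]
        refine sum_congr rfl fun v hv => ?_
        simp only [centeredIndicator, hv, if_true]
        split_ifs <;> ring
    _ = vertOn m univ U - vertOn m univ U / vertOn m univ V₁ * vertOn m univ V₁ := by
        rw [sum_sub_distrib, ← mul_sum, sum_ite_mem, inter_eq_right.2 hUV]
        rfl
    _ = 0 := by rw [hcancel, sub_self]

lemma iprodK_centeredIndicator_ite_notMem (hUV : U ⊆ V₁) :
    iprodK m (centeredIndicator m V₁ U) (fun v => if v ∈ V₁ then 0 else 1) = 0 := by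
  refine sum_eq_zero fun v _ => ?_
  by_cases hv : v ∈ V₁
  · simp [hv]
  · simp [centeredIndicator, hv, notMem_mono hUV hv]

lemma iprodK_centeredIndicator_self_le (hnonneg : ∀ u v, 0 ≤ m u v) (hUV : U ⊆ V₁) :
    iprodK m (centeredIndicator m V₁ U) (centeredIndicator m V₁ U) ≤ vertOn m univ U := by
  set φ := centeredIndicator m V₁ U with hφ
  set c := vertOn m univ U / vertOn m univ V₁
  have hc_nonneg : 0 ≤ c := div_nonneg (vertOn_nonneg hnonneg U) (vertOn_nonneg hnonneg V₁)
  calc iprodK m φ φ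
      = iprodK m φ (fun v => if v ∈ U then 1 else 0)
          - c * iprodK m φ (fun v => if v ∈ V₁ then 1 else 0) := by
        simp only [iprodK, mul_sum, ← sum_sub_distrib]
        refine sum_congr rfl fun v _ => ?_
        rw [hφ, centeredIndicator]
        ring
    _ = ∑ v ∈ U, degOn m univ v * φ v := by
        rw [iprodK_centeredIndicator_ite_mem hnonneg hUV, mul_zero, sub_zero, iprodK_ite_mem]
    _ ≤ vertOn m univ U := by
        refine sum_le_sum fun v hv => mul_le_of_le_one_right (degOn_nonneg hnonneg v) ?_
        simpa [hφ, centeredIndicator, hv, hUV hv] using hc_nonneg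

lemma sum_degOn_mul_walkK_centeredIndicator (hnonneg : ∀ u v, 0 ≤ m u v) {W : Finset α}
    (hW : ∀ w ∈ W, ∀ v, m w v ≠ 0 → v ∈ V₁) :
    ∑ w ∈ W, degOn m univ w * walkK m (centeredIndicator m V₁ U) w
      = pairW m W U - vertOn m univ U / vertOn m univ V₁ * vertOn m univ W := by
  unfold pairW vertOn
  rw [mul_sum, ← sum_sub_distrib]
  refine sum_congr rfl fun w hw => ?_
  have hterm (v : α) : m w v * centeredIndicator m V₁ U v
      = (if v ∈ U then m w v else 0) - vertOn m univ U / vertOn m univ V₁ * m w v := by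
    by_cases hwv : m w v = 0
    · simp [hwv]
    · simp only [centeredIndicator, hW w hw v hwv, if_true]
      split_ifs <;> ring
  rw [degOn_mul_walkK hnonneg, sum_congr rfl fun v _ => hterm v, sum_sub_distrib, ← mul_sum,
    sum_ite_mem, univ_inter]
  rfl

end CenteredIndicator

lemma mul_le_of_sq_sub_le {a b c d e lam : ℝ} (hb : 0 ≤ b) (hd : 0 < d) (hlam : 0 ≤ lam)
    (hae : d * a ≤ e) (heb : e ≤ b) (hsq : (e - c * b) ^ 2 ≤ lam ^ 2 * (a * b)) :
    d * a ≤ (lam / √d + c) * b := by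
  have hab : a * b ≤ b / d * b :=
    mul_le_mul_of_nonneg_right ((le_div_iff₀' hd).2 (hae.trans heb)) hb
  have hsq' : (e - c * b) ^ 2 ≤ (lam / √d * b) ^ 2 :=
    calc (e - c * b) ^ 2 ≤ lam ^ 2 * (a * b) := hsq
      _ ≤ lam ^ 2 * (b / d * b) := mul_le_mul_of_nonneg_left hab (sq_nonneg lam)
      _ = (lam / √d * b) ^ 2 := by rw [mul_pow, div_pow, Real.sq_sqrt hd.le]; ring
  have hdev : e - c * b ≤ lam / √d * b := (abs_le_of_sq_le_sq' hsq' (by positivity)).2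
  linarith

section Expansion

variable {α : Type*} [Fintype α] [DecidableEq α] {m : α → α → ℝ} {V₁ U W : Finset α} {lam : ℝ}

theorem sq_pairW_sub_le (hnonneg : ∀ u v, 0 ≤ m u v)
    (hspec : ∀ φ : α → ℝ,
      iprodK m φ (fun v => if v ∈ V₁ then 1 else 0) = 0 →
      iprodK m φ (fun v => if v ∈ V₁ then 0 else 1) = 0 →
      iprodK m (walkK m φ) (walkK m φ) ≤ lam ^ 2 * iprodK m φ φ)
    (hUV : U ⊆ V₁) (hW : ∀ w ∈ W, ∀ v, m w v ≠ 0 → v ∈ V₁) :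
    (pairW m W U - vertOn m univ U / vertOn m univ V₁ * vertOn m univ W) ^ 2
      ≤ lam ^ 2 * (vertOn m univ U * vertOn m univ W) := by
  set φ := centeredIndicator m V₁ U
  have hwalk : iprodK m (walkK m φ) (walkK m φ) ≤ lam ^ 2 * vertOn m univ U :=
    (hspec φ (iprodK_centeredIndicator_ite_mem hnonneg hUV)
      (iprodK_centeredIndicator_ite_notMem hUV)).trans <|
        mul_le_mul_of_nonneg_left (iprodK_centeredIndicator_self_le hnonneg hUV) (sq_nonneg lam)
  calc (pairW m W U - vertOn m univ U / vertOn m univ V₁ * vertOn m univ W) ^ 2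
      = (∑ w ∈ W, degOn m univ w * walkK m φ w) ^ 2 := by
        rw [sum_degOn_mul_walkK_centeredIndicator hnonneg hW]
    _ ≤ vertOn m univ W * iprodK m (walkK m φ) (walkK m φ) := sq_sum_degOn_mul_le hnonneg _ W
    _ ≤ vertOn m univ W * (lam ^ 2 * vertOn m univ U) :=
        mul_le_mul_of_nonneg_left hwalk (vertOn_nonneg hnonneg W)
    _ = lam ^ 2 * (vertOn m univ U * vertOn m univ W) := by ring

/-- The case `V₁ = univ` is the statement for weighted graphs that need not be bipartite. -/
theorem stmt18_general (hsymm : ∀ u v, m u v = m v u) (hnonneg : ∀ u v, 0 ≤ m u v)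
    (hlam : 0 ≤ lam)
    (hspec : ∀ φ : α → ℝ,
      iprodK m φ (fun v => if v ∈ V₁ then 1 else 0) = 0 →
      iprodK m φ (fun v => if v ∈ V₁ then 0 else 1) = 0 →
      iprodK m (walkK m φ) (walkK m φ) ≤ lam ^ 2 * iprodK m φ φ)
    (hUV : U ⊆ V₁) (hU : U.Nonempty) {d : ℝ} (hd : 0 < d)
    (hW : ∀ w ∈ W, ∀ v, m w v ≠ 0 → v ∈ V₁)
    (hWdeg : ∀ u ∈ U, d ≤ (∑ v ∈ W, m u v) / degOn m univ u) :
    vertOn m univ U / vertOn m univ W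
      ≤ 1 / d * (lam / √d + vertOn m univ U / vertOn m univ V₁) := by
  have hdeg (u : α) (hu : u ∈ U) : 0 < degOn m univ u :=
    degOn_pos_of_le_div hnonneg hd (hWdeg u hu)
  have hlower : d * vertOn m univ U ≤ pairW m W U :=
    pairW_comm hsymm U W ▸ mul_vertOn_le_pairW fun u hu => (le_div_iff₀ (hdeg u hu)).1 (hWdeg u hu)
  have hupper : pairW m W U ≤ vertOn m univ W := pairW_le_vertOn hnonneg W (subset_univ U)
  have hWpos : 0 < vertOn m univ W :=
    (mul_pos hd (sum_pos hdeg hU)).trans_le (hlower.trans hupper)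
  rw [div_le_iff₀ hWpos, mul_assoc, one_div, le_inv_mul_iff₀ hd]
  exact mul_le_of_sq_sub_le hWpos.le hd hlam hlower hupper (sq_pairW_sub_le hnonneg hspec hUV hW)

end Expansion

/-- Lemma 7.9. -/
theorem stmt18 {α : Type*} [Fintype α] [DecidableEq α] (m : α → α → ℝ)
    (hsymm : ∀ u v : α, m u v = m v u) (hnonneg : ∀ u v : α, 0 ≤ m u v)
    (hdiag : ∀ v : α, m v v = 0)
    (V₁ : Finset α)
    (hbip : ∀ u v : α, m u v ≠ 0 → (u ∈ V₁ ↔ v ∉ V₁))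
    (hconn : (SimpleGraph.fromRel (fun u v => m u v ≠ 0)).Connected)
    (lam : ℝ) (hlam : 0 ≤ lam)
    (hspec : ∀ φ : α → ℝ,
      iprodK m φ (fun v => if v ∈ V₁ then 1 else 0) = 0 →
      iprodK m φ (fun v => if v ∈ V₁ then 0 else 1) = 0 →
      iprodK m (walkK m φ) (walkK m φ) ≤ lam ^ 2 * iprodK m φ φ)
    (U : Finset α) (hUV : U ⊆ V₁) (hU : U.Nonempty)
    (d : ℝ) (hd0 : 0 < d) (hd1 : d < 1)
    (W : Finset α) (hW : W ⊆ (Finset.univ \ V₁).filter (fun v => ∃ u ∈ U, m u v ≠ 0))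
    (hWdeg : ∀ u ∈ U, d ≤ (∑ v ∈ W, m u v) / degOn m Finset.univ u) :
    vertOn m Finset.univ U / vertOn m Finset.univ W
      ≤ 4 / (3 * d) *
          (2 * lam / Real.sqrt d + vertOn m Finset.univ U / vertOn m Finset.univ V₁) := by
  have hW_nbr (w : α) (hw : w ∈ W) (v : α) (hwv : m w v ≠ 0) : v ∈ V₁ :=
    not_not.1 fun hv => (mem_sdiff.1 (mem_filter.1 (hW hw)).1).2 ((hbip w v hwv).2 hv)
  have hU_nonneg := vertOn_nonneg (vs := univ) hnonneg U
  have hV_nonneg := vertOn_nonneg (vs := univ) hnonneg V₁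
  calc vertOn m univ U / vertOn m univ W
      ≤ 1 / d * (lam / √d + vertOn m univ U / vertOn m univ V₁) :=
        stmt18_general hsymm hnonneg hlam hspec hUV hU hd0 hW_nbr hWdeg
    _ ≤ 4 / (3 * d) * (2 * lam / √d + vertOn m univ U / vertOn m univ V₁) := by
        rw [← div_div]
        gcongr <;> linarith
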